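/- Let f : ℕ → ℚ be a sequence with f(i) ≠ 0 for all i ≥ 1, and define B_f(n,n) = 1 and, for k < n, B_f(n,k) = Σ_{s=1}^{n−k} (−1)^s Σ_{(k_1,…,k_s) composition of n−k into s positive parts} f!(n)/(f!(k)·f!(k_1)⋯f!(k_s)). Let (Φ_n(x))_{n ≥ 0} be a sequence of rational polynomials with Φ_0(x) = 1. Then the following are equivalent: (i) for all n, Φ_n(x) = Σ_{k=0}^{n} B_f(n,k)·x^k; (ii) for all n, x^n = Σ_{k=0}^{n} C_f(n,k)·Φ_k(x). -/

import Mathlib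

open Polynomial

/-- The F-factorial of a rational-valued sequence: `ffact f n = ∏_{i=1}^{n} f i`. -/
def ffact (f : ℕ → ℚ) (n : ℕ) : ℚ := ∏ i ∈ Finset.range n, f (i + 1)

/-- Compositions of `m` into `s` positive parts, as tuples `Fin s → ℕ`. -/
def comps (s m : ℕ) : Finset (Fin s → ℕ) :=
  (Finset.Nat.antidiagonalTuple s m).filter fun k => ∀ j, 1 ≤ k j

/-- The F-nomial coefficient `C_f(n,k) = f!(n)/(f!(k)·f!(n-k))`. -/
def Cf (f : ℕ → ℚ) (n k : ℕ) : ℚ := ffact f n / (ffact f k * ffact f (n - k))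

/-- The inverse array: `B_f(n,n) = 1` and for `k < n`,
`B_f(n,k) = Σ_{s=1}^{n-k} (-1)^s Σ_{compositions of n-k} f!(n)/(f!(k)·f!(k₁)⋯f!(k_s))`. -/
def Bf (f : ℕ → ℚ) (n k : ℕ) : ℚ :=
  if n = k then 1 else
    ∑ s ∈ Finset.Icc 1 (n - k), (-1 : ℚ) ^ s *
      ∑ c ∈ comps s (n - k), ffact f n / (ffact f k * ∏ j, ffact f (c j))

/-!
In terms of the series `G = ∑ tⁿ / f!(n)`, both arrays are weighted convolutions:
`C_f(n,k) = f!(n) · [tⁿ⁻ᵏ] G / f!(k)` and `B_f(n,k) = f!(n) · [tⁿ⁻ᵏ] G⁻¹ / f!(k)`, the latter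
because `G⁻¹ = ∑ₛ (1 - G)ˢ` and the coefficients of `(1 - G)ˢ` are sums over compositions into `s`
parts. After dividing the `n`th terms by `f!(n)`, the two expansions therefore express
multiplication by `G⁻¹` and by `G`.
-/

theorem coeff_pow_eq_sum_antidiagonalTuple {R : Type*} [CommSemiring R] (p : PowerSeries R)
    (s m : ℕ) :
    PowerSeries.coeff m (p ^ s) =
      ∑ c ∈ Finset.Nat.antidiagonalTuple s m, ∏ j, PowerSeries.coeff (c j) p := by
  rw [← Fin.prod_const, PowerSeries.coeff_prod]
  exact Finset.sum_nbij' (fun l => l) Finsupp.equivFunOnFinite.symm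
    (by simp [Finset.Nat.mem_antidiagonalTuple]) (by simp [Finset.Nat.mem_antidiagonalTuple])
    (by simp) (by simp) (by simp)

theorem coeff_pow_eq_sum_comps {R : Type*} [CommSemiring R] {p : PowerSeries R}
    (hp : PowerSeries.constantCoeff p = 0) (s m : ℕ) :
    PowerSeries.coeff m (p ^ s) = ∑ c ∈ comps s m, ∏ j, PowerSeries.coeff (c j) p := by
  rw [coeff_pow_eq_sum_antidiagonalTuple, comps, Finset.sum_filter_of_ne]
  intro c _ hprod j
  refine Nat.one_le_iff_ne_zero.mpr fun hj => hprod (Finset.prod_eq_zero (Finset.mem_univ j) ?_)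
  rw [hj, PowerSeries.coeff_zero_eq_constantCoeff_apply, hp]

theorem coeff_eq_sum_coeff_pow_of_one_sub_mul_eq_one {R : Type*} [Ring R] {p q : PowerSeries R}
    (hp : PowerSeries.constantCoeff p = 0) (hpq : (1 - p) * q = 1) (m : ℕ) :
    PowerSeries.coeff m q = ∑ s ∈ Finset.range (m + 1), PowerSeries.coeff m (p ^ s) := by
  have geometric : ∑ s ∈ Finset.range (m + 1), p ^ s = q - p ^ (m + 1) * q := by
    rw [← one_sub_mul, ← geom_sum_mul_neg, mul_assoc, hpq, mul_one]
  have remainder : PowerSeries.coeff m (p ^ (m + 1) * q) = 0 := by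
    apply PowerSeries.coeff_of_lt_order
    calc (m : ℕ∞) < (m + 1 : ℕ) := by exact_mod_cast m.lt_succ_self
      _ ≤ (p ^ (m + 1)).order := PowerSeries.le_order_pow_of_constantCoeff_eq_zero _ hp
      _ ≤ (p ^ (m + 1)).order + q.order := le_self_add
      _ ≤ (p ^ (m + 1) * q).order := PowerSeries.le_order_mul _ _
  rw [← map_sum, geometric, map_sub, remainder, sub_zero]

theorem coeff_eq_sum_comps_of_mul_eq_one {R : Type*} [CommRing R] {p q : PowerSeries R}
    (hp : PowerSeries.constantCoeff p = 1) (hpq : p * q = 1) {m : ℕ} (hm : m ≠ 0) :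
    PowerSeries.coeff m q =
      ∑ s ∈ Finset.Icc 1 m, (-1) ^ s * ∑ c ∈ comps s m, ∏ j, PowerSeries.coeff (c j) p := by
  have constantCoeff_one_sub : PowerSeries.constantCoeff (1 - p) = 0 := by simp [hp]
  have coeff_one_sub {i : ℕ} (hi : 1 ≤ i) :
      PowerSeries.coeff i (1 - p) = -PowerSeries.coeff i p := by
    simp [PowerSeries.coeff_one, Nat.one_le_iff_ne_zero.mp hi]
  rw [coeff_eq_sum_coeff_pow_of_one_sub_mul_eq_one constantCoeff_one_sub (by rwa [sub_sub_cancel]),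
    Finset.range_eq_Ico, Finset.sum_eq_sum_Ico_succ_bot (by omega), pow_zero,
    PowerSeries.coeff_one, if_neg hm, zero_add, Finset.Ico_add_one_right_eq_Icc]
  refine Finset.sum_congr rfl fun s _ => ?_
  rw [coeff_pow_eq_sum_comps constantCoeff_one_sub, Finset.mul_sum]
  refine Finset.sum_congr rfl fun c hc => ?_
  have parts_pos : ∀ j, 1 ≤ c j := (Finset.mem_filter.mp hc).2
  simp only [coeff_one_sub (parts_pos _), Finset.prod_neg, Finset.card_univ, Fintype.card_fin]

section Convolution

open Finset.HasAntidiagonal (antidiagonal)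

variable {R M : Type*} [Semiring R] [AddCommMonoid M] [Module R M]

/-- The action of power series on sequences in a module by convolution: `a`, read as the formal
series `∑ aₙ tⁿ`, is multiplied by `p`. -/
noncomputable def convolve (p : PowerSeries R) (a : ℕ → M) (n : ℕ) : M :=
  ∑ ij ∈ antidiagonal n, PowerSeries.coeff ij.1 p • a ij.2

theorem one_convolve (a : ℕ → M) : convolve (1 : PowerSeries R) a = a := by
  funext n
  rw [convolve, Finset.sum_eq_single (0, n)]
  · simp
  · rintro ⟨i, j⟩ hij hne
    have hi : i ≠ 0 := by
      rintro rfl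
      simp_all
    simp [PowerSeries.coeff_one, hi]
  · simp

theorem mul_convolve (p q : PowerSeries R) (a : ℕ → M) :
    convolve (p * q) a = convolve p (convolve q a) := by
  funext n
  simp only [convolve, PowerSeries.coeff_mul, Finset.sum_smul, Finset.smul_sum, Finset.sum_sigma']
  apply Finset.sum_nbij' (fun ⟨⟨_, j⟩, ⟨k, l⟩⟩ => ⟨(k, l + j), (l, j)⟩)
    (fun ⟨⟨i, _⟩, ⟨k, l⟩⟩ => ⟨(i + k, l), (i, k)⟩) <;>
    grind [mul_smul, Finset.HasAntidiagonal.mem_antidiagonal]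

theorem eq_convolve_iff {p q : PowerSeries R} (hpq : p * q = 1) (hqp : q * p = 1) {a b : ℕ → M} :
    a = convolve p b ↔ b = convolve q a := by
  constructor
  · rintro rfl
    rw [← mul_convolve, hqp, one_convolve]
  · rintro rfl
    rw [← mul_convolve, hpq, one_convolve]

end Convolution

section WeightedConvolution

variable {K M : Type*} [DivisionSemiring K] [AddCommMonoid M] [Module K M] {w : ℕ → K}

theorem eq_sum_weighted_coeff_iff_eq_convolve (hw : ∀ n, w n ≠ 0) (p : PowerSeries K)
    (a b : ℕ → M) :
    (∀ n, a n = ∑ k ∈ Finset.range (n + 1), (w n * PowerSeries.coeff (n - k) p / w k) • b k) ↔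
      (fun n => (w n)⁻¹ • a n) = convolve p fun n => (w n)⁻¹ • b n := by
  rw [funext_iff]
  refine forall_congr' fun n => ?_
  rw [inv_smul_eq_iff₀ (hw n), convolve, ← Finset.Nat.sum_antidiagonal_swap,
    Finset.Nat.sum_antidiagonal_eq_sum_range_succ_mk, Finset.smul_sum]
  simp only [Prod.fst_swap, Prod.snd_swap, smul_smul, div_eq_mul_inv, mul_assoc]

theorem eq_sum_weighted_coeff_iff_of_mul_eq_one (hw : ∀ n, w n ≠ 0) {p q : PowerSeries K}
    (hpq : p * q = 1) (hqp : q * p = 1) (a b : ℕ → M) :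
    (∀ n, a n = ∑ k ∈ Finset.range (n + 1), (w n * PowerSeries.coeff (n - k) p / w k) • b k) ↔
      ∀ n, b n = ∑ k ∈ Finset.range (n + 1), (w n * PowerSeries.coeff (n - k) q / w k) • a k := by
  rw [eq_sum_weighted_coeff_iff_eq_convolve hw, eq_sum_weighted_coeff_iff_eq_convolve hw,
    eq_convolve_iff hpq hqp]

end WeightedConvolution

/-- The series `∑ tⁿ / f!(n)`, the exponential series of the sequence `f`. -/
def fexp (f : ℕ → ℚ) : PowerSeries ℚ := PowerSeries.mk fun n => (ffact f n)⁻¹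

theorem ffact_ne_zero {f : ℕ → ℚ} (hf : ∀ i : ℕ, 1 ≤ i → f i ≠ 0) (n : ℕ) : ffact f n ≠ 0 :=
  Finset.prod_ne_zero_iff.mpr fun i _ => hf (i + 1) i.succ_pos

theorem constantCoeff_fexp (f : ℕ → ℚ) : PowerSeries.constantCoeff (fexp f) = 1 := by
  simp [fexp, ffact, ← PowerSeries.coeff_zero_eq_constantCoeff_apply]

theorem fexp_mul_inv (f : ℕ → ℚ) : fexp f * (fexp f)⁻¹ = 1 :=
  PowerSeries.mul_inv_cancel _ (by simp [constantCoeff_fexp])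

theorem Cf_eq_coeff_fexp (f : ℕ → ℚ) (n k : ℕ) :
    Cf f n k = ffact f n * PowerSeries.coeff (n - k) (fexp f) / ffact f k := by
  rw [Cf, fexp, PowerSeries.coeff_mk]
  ring

theorem Bf_eq_coeff_inv_fexp {f : ℕ → ℚ} {n k : ℕ} (hn : ffact f n ≠ 0) (hk : k ≤ n) :
    Bf f n k = ffact f n * PowerSeries.coeff (n - k) (fexp f)⁻¹ / ffact f k := by
  obtain rfl | hlt := hk.eq_or_lt
  · simp [Bf, constantCoeff_fexp, hn]
  · rw [Bf, if_neg hlt.ne', coeff_eq_sum_comps_of_mul_eq_one (constantCoeff_fexp f)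
      (fexp_mul_inv f) (Nat.sub_ne_zero_of_lt hlt), Finset.mul_sum, Finset.sum_div]
    refine Finset.sum_congr rfl fun s _ => ?_
    simp only [fexp, PowerSeries.coeff_mk, Finset.prod_inv_distrib, Finset.mul_sum, Finset.sum_div]
    exact Finset.sum_congr rfl fun c _ => by ring

theorem Fnomial_polynomial_inversion_general {M : Type*} [AddCommMonoid M] [Module ℚ M]
    (f : ℕ → ℚ) (hf : ∀ i : ℕ, 1 ≤ i → f i ≠ 0) (a b : ℕ → M) :
    (∀ n : ℕ, a n = ∑ k ∈ Finset.range (n + 1), Bf f n k • b k) ↔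
      ∀ n : ℕ, b n = ∑ k ∈ Finset.range (n + 1), Cf f n k • a k := by
  have Bf_sum (n : ℕ) : ∑ k ∈ Finset.range (n + 1), Bf f n k • b k =
      ∑ k ∈ Finset.range (n + 1),
        (ffact f n * PowerSeries.coeff (n - k) (fexp f)⁻¹ / ffact f k) • b k :=
    Finset.sum_congr rfl fun k hk => by
      rw [Bf_eq_coeff_inv_fexp (ffact_ne_zero hf n) (Finset.mem_range_succ_iff.mp hk)]
  simp only [Bf_sum, Cf_eq_coeff_fexp]
  exact eq_sum_weighted_coeff_iff_of_mul_eq_one (ffact_ne_zero hf)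
    (by rw [mul_comm, fexp_mul_inv]) (fexp_mul_inv f) a b

/-- For a polynomial sequence `Φ` with `Φ_0 = 1`, the expansions
`Φ_n(x) = Σ_k B_f(n,k)·x^k` and `x^n = Σ_k C_f(n,k)·Φ_k(x)` are equivalent. -/
theorem Fnomial_polynomial_inversion (f : ℕ → ℚ) (hf : ∀ i : ℕ, 1 ≤ i → f i ≠ 0)
    (Φ : ℕ → Polynomial ℚ) (hΦ0 : Φ 0 = 1) :
    (∀ n : ℕ, Φ n = ∑ k ∈ Finset.range (n + 1), Polynomial.C (Bf f n k) * X ^ k) ↔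
      (∀ n : ℕ, (X : Polynomial ℚ) ^ n =
        ∑ k ∈ Finset.range (n + 1), Polynomial.C (Cf f n k) * Φ k) := by
  simpa only [Polynomial.smul_eq_C_mul] using
    Fnomial_polynomial_inversion_general f hf Φ fun n => X ^ n
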